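/- Let 𝔗𝔏_2 = ({0,1,2}; C_3, T, L_2) and let 𝔄 be the structure with domain {0,1,2}^2 and relations C_3^A := {((x_1,x_2),(y_1,y_2)) : (x_1,y_1) ∈ C_3 and (y_2,x_2) ∈ C_3}, T^A := {((x_1,x_2),(y_1,y_2)) : x_1=y_2 and x_2=y_1}, and L_2^A := {((x_1,x_2),(y_1,y_2),(z_1,z_2)) : (x_1,y_1,z_1) ∈ L_2, (x_1,x_2,1) ∈ L_2, (y_1,y_2,1) ∈ L_2, (z_1,z_2,1) ∈ L_2}. Then the map g with g(0)=(0,1), g(1)=(1,0), g(2)=(2,2) is a homomorphism from 𝔗𝔏_2 to 𝔄, and the map h with h(x,y)=0 if (x,y) ∈ C_3, h(x,y)=1 if (y,x) ∈ C_3, and h(x,y)=2 if x=y, is a homomorphism from 𝔄 to 𝔗𝔏_2. In particular 𝔗𝔏_2 and 𝔄 are homomorphically equivalent. -/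

import Mathlib

/-- The three-element domain `{0,1,2}`. -/
abbrev D3 : Type := Fin 3

/-- `C₃ = {(0,1),(1,2),(2,0)}`. -/
def C3P (a b : D3) : Prop := (a = 0 ∧ b = 1) ∨ (a = 1 ∧ b = 2) ∨ (a = 2 ∧ b = 0)

instance (a b : D3) : Decidable (C3P a b) := by unfold C3P; infer_instance

/-- `T = {(0,1),(1,0),(2,2)}`. -/
def TP (a b : D3) : Prop := (a = 0 ∧ b = 1) ∨ (a = 1 ∧ b = 0) ∨ (a = 2 ∧ b = 2)

/-- `L₂ = {(x,y,z) ∈ {0,1}³ : x + y + z ≡ 0 (mod 2)}`. -/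
def L2P (a b c : D3) : Prop :=
  (a = 0 ∨ a = 1) ∧ (b = 0 ∨ b = 1) ∧ (c = 0 ∨ c = 1) ∧ (a.val + b.val + c.val) % 2 = 0

/-- The relation `C₃^𝔄` on `{0,1,2}²`. -/
def C3A (x y : D3 × D3) : Prop := C3P x.1 y.1 ∧ C3P y.2 x.2

/-- The relation `T^𝔄` on `{0,1,2}²`. -/
def TA (x y : D3 × D3) : Prop := x.1 = y.2 ∧ x.2 = y.1

/-- The relation `L₂^𝔄` on `{0,1,2}²`. -/
def L2A (x y z : D3 × D3) : Prop :=
  L2P x.1 y.1 z.1 ∧ L2P x.1 x.2 1 ∧ L2P y.1 y.2 1 ∧ L2P z.1 z.2 1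

/-- The map `g` with `g(0) = (0,1)`, `g(1) = (1,0)`, `g(2) = (2,2)`. -/
def gMap : D3 → D3 × D3 := ![(0,1), (1,0), (2,2)]

/-- The map `h` with `h(x,y) = 0` if `(x,y) ∈ C₃`, `h(x,y) = 1` if `(y,x) ∈ C₃`,
and `h(x,y) = 2` if `x = y`. -/
def hMap : D3 × D3 → D3 := fun p =>
  if C3P p.1 p.2 then 0 else if C3P p.2 p.1 then 1 else 2

/-- `g` is a homomorphism from `𝔗𝔏₂` to `𝔄`. -/
def IsHomTL2toA (g : D3 → D3 × D3) : Prop :=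
  (∀ a b : D3, C3P a b → C3A (g a) (g b)) ∧
  (∀ a b : D3, TP a b → TA (g a) (g b)) ∧
  (∀ a b c : D3, L2P a b c → L2A (g a) (g b) (g c))

/-- `h` is a homomorphism from `𝔄` to `𝔗𝔏₂`. -/
def IsHomAtoTL2 (h : D3 × D3 → D3) : Prop :=
  (∀ x y : D3 × D3, C3A x y → C3P (h x) (h y)) ∧
  (∀ x y : D3 × D3, TA x y → TP (h x) (h y)) ∧
  (∀ x y z : D3 × D3, L2A x y z → L2P (h x) (h y) (h z))

theorem stmt8 :
    IsHomTL2toA gMap ∧ IsHomAtoTL2 hMap ∧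
    (∃ (g : D3 → D3 × D3) (h : D3 × D3 → D3), IsHomTL2toA g ∧ IsHomAtoTL2 h) := by
  have hg : IsHomTL2toA gMap := by
    refine ⟨?_, ?_, ?_⟩
    · unfold C3A
      decide
    · unfold TA TP
      decide
    · have key : ∀ u : D3, (u = 0 ∨ u = 1) → (gMap u).1 = u ∧ L2P u (gMap u).2 1 := by
        unfold L2P
        decide
      intro a b c h
      obtain ⟨ha, ha'⟩ := key a h.1
      obtain ⟨hb, hb'⟩ := key b h.2.1
      obtain ⟨hc, hc'⟩ := key c h.2.2.1
      unfold L2A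
      rw [ha, hb, hc]
      exact ⟨h, ha', hb', hc'⟩
  have hh : IsHomAtoTL2 hMap := by
    refine ⟨?_, ?_, ?_⟩
    · unfold C3A
      decide
    · unfold TA TP
      decide
    · rintro ⟨a, a'⟩ ⟨b, b'⟩ ⟨c, c'⟩ ⟨h1, h2, h3, h4⟩
      have key : ∀ u v : D3, L2P u v 1 → hMap (u, v) = u := by
        unfold L2P
        decide
      rw [key _ _ h2, key _ _ h3, key _ _ h4]
      exact h1
  exact ⟨hg, hh, gMap, hMap, hg, hh⟩
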